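/- Let i ∈ {1,2} and let n ≥ 32. If the statements T(n, t(n); s_i(n−24), 0, 0) and T(n−24, s_i(n−24); 0, 0, 0) are true, then the statement T(n, s_i(n); 0, 0, 0) is true; i.e., there exist ℓ_1, m_1, …, ℓ_{s_i(n)}, m_{s_i(n)} ∈ ℂ^{n+1} such that dim_ℂ Σ_{j=1}^{s_i(n)} (ℓ_j²·U + ℓ_j·m_j·U) = min{(2n+1)·s_i(n), C(n+3,3)}. -/

import Mathlib

open MvPolynomial

/-- The linear form associated with a coefficient vector `v ∈ ℂ^{n+1}`. -/
noncomputable def lin {n : ℕ} (v : Fin (n + 1) → ℂ) : MvPolynomial (Fin (n + 1)) ℂ :=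
  ∑ j, MvPolynomial.C (v j) * MvPolynomial.X j

/-- The subspace `f·U = {f·u : u ∈ U}` of the polynomial ring, where `U` is the
space of linear forms. -/
noncomputable def mulU {n : ℕ} (f : MvPolynomial (Fin (n + 1)) ℂ) :
    Submodule ℂ (MvPolynomial (Fin (n + 1)) ℂ) :=
  Submodule.span ℂ (Set.range fun j : Fin (n + 1) => f * MvPolynomial.X j)

/-- The affine cone `ℓ^{d-1}·U + ℓ^{d-2}·m·U` over the tangent space to the tangential
variety `T_{n,d}` of the `d`-th Veronese variety at the point `[ℓ^{d-1} m]`. -/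
noncomputable def tanCone {n : ℕ} (d : ℕ) (ℓ m : Fin (n + 1) → ℂ) :
    Submodule ℂ (MvPolynomial (Fin (n + 1)) ℂ) :=
  mulU (lin ℓ ^ (d - 1)) ⊔ mulU (lin ℓ ^ (d - 2) * lin m)

/-- `v ∈ U_{i+1}`, i.e. the coordinates of `v` indexed by `{24i, …, 24i+23}` vanish. -/
def memU {n : ℕ} (i : Fin 3) (v : Fin (n + 1) → ℂ) : Prop :=
  ∀ j : Fin (n + 1), 24 * (i : ℕ) ≤ (j : ℕ) → (j : ℕ) < 24 * (i : ℕ) + 24 → v j = 0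

/-- `S_3(U_{i+1})`: the span of all products of three linear forms belonging to `U_{i+1}`. -/
noncomputable def S3U {n : ℕ} (i : Fin 3) : Submodule ℂ (MvPolynomial (Fin (n + 1)) ℂ) :=
  Submodule.span ℂ
    {p | ∃ a b c : Fin (n + 1) → ℂ,
      memU i a ∧ memU i b ∧ memU i c ∧ p = lin a * lin b * lin c}

/-- `v ∈ U_K`, the span of the variables `x_0, …, x_71`. -/
def memK {n : ℕ} (v : Fin (n + 1) → ℂ) : Prop :=
  ∀ j : Fin (n + 1), 72 ≤ (j : ℕ) → v j = 0

/-- `S_3(U_K)`: the span of all products of three linear forms in `x_0, …, x_71`. -/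
noncomputable def S3K (n : ℕ) : Submodule ℂ (MvPolynomial (Fin (n + 1)) ℂ) :=
  Submodule.span ℂ
    {p | ∃ a b c : Fin (n + 1) → ℂ,
      memK a ∧ memK b ∧ memK c ∧ p = lin a * lin b * lin c}

/-- The alternating sum `Σ_{j=1}^k (−1)^{j−1} C(k,j) · C(n−24j+3, 3)` (with the convention
`C(m,3) = 0` for `m < 3`, realized by truncated subtraction `n+3−24j`). -/
def altsum (n k : ℕ) : ℤ :=
  ∑ j ∈ Finset.Icc 1 k, (-1 : ℤ) ^ (j - 1) * (k.choose j : ℤ) * ((n + 3 - 24 * j).choose 3 : ℤ)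

/-- `k = #{i : a_i ≠ 0}`. -/
def kcount (a : Fin 3 → ℕ) : ℕ := (Finset.univ.filter fun i => a i ≠ 0).card

/-- The expected dimension `w(n, s; a_1, a_2, a_3)`, as an integer. -/
def expdimZ (n s : ℕ) (a : Fin 3 → ℕ) : ℤ :=
  min (altsum n (kcount a) + 48 * ((a 0 + a 1 + a 2 : ℕ) : ℤ) + (2 * n + 1) * s)
    (((n + 3).choose 3 : ℤ))

/-- The subspace `W(n, s; a_1, a_2, a_3)` determined by the given points. -/
noncomputable def Wspace {n s : ℕ} {a : Fin 3 → ℕ}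
    (ℓ m : Fin s → Fin (n + 1) → ℂ)
    (ℓ' m' : (i : Fin 3) → Fin (a i) → Fin (n + 1) → ℂ) :
    Submodule ℂ (MvPolynomial (Fin (n + 1)) ℂ) :=
  (⨆ i : {i : Fin 3 // a i ≠ 0},
      (S3U i.1 ⊔ ⨆ j : Fin (a i.1), tanCone 3 (ℓ' i.1 j) (m' i.1 j)))
    ⊔ ⨆ i : Fin s, tanCone 3 (ℓ i) (m i)

/-- The statement `T(n, s; a_1, a_2, a_3)`: some choice of points realizes the expected
dimension `w(n, s; a_1, a_2, a_3)`. -/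
def TStmt (n s : ℕ) (a : Fin 3 → ℕ) : Prop :=
  ∃ (ℓ m : Fin s → Fin (n + 1) → ℂ)
    (ℓ' m' : (i : Fin 3) → Fin (a i) → Fin (n + 1) → ℂ),
    (∀ (i : Fin 3) (j : Fin (a i)), memU i (ℓ' i j) ∧ memU i (m' i j)) ∧
    (Module.finrank ℂ (Wspace ℓ m ℓ' m') : ℤ) = expdimZ n s a

/-- `s_1(n) = 48k² + (11+4r)k + ⌊(4r²+22r+33)/48⌋` where `n = 24k + r`. -/
def s1 (n : ℕ) : ℕ :=
  48 * (n / 24) ^ 2 + (11 + 4 * (n % 24)) * (n / 24) +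
    (4 * (n % 24) ^ 2 + 22 * (n % 24) + 33) / 48

/-- `s_2(n) = s_1(n) + 1`. -/
def s2 (n : ℕ) : ℕ := s1 n + 1

/-- `t(n) = 4n − 37`. -/
def tfun (n : ℕ) : ℕ := 4 * n - 37

/-- The expected codimension `c(n)` of `W(n, t(n); s_1(n−24), 0, 0)`. -/
def cInt (n : ℕ) : ℤ :=
  ((n + 3).choose 3 : ℤ) - ((n - 21).choose 3 : ℤ) - (tfun n : ℤ) * (2 * n + 1) -
    48 * (s1 (n - 24) : ℤ)

/-!
Both hypotheses constrain the tangent cones at points of `U_1`. Along the pencil joining a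
configuration satisfying the first to one satisfying the second, each condition fails only for
finitely many parameters, so a single configuration satisfies both. For it, adding `S_3(U_1)` to the
span of all the tangent cones raises the dimension by at most `dim S_3(U_1)` minus the dimension of
the span inside `S_3(U_1)`, and Grassmann's formula gives the lower bound sought. The expected
dimensions match because, with `N = n - 24` and `q = 4N² + 22N + 33`,
`48 C(N+3,3) = (2N+1) q + 15` and `C(N+27,3) - C(N+3,3) - (2N+49) t(N+24) = q`:
whether `48 s ≤ q` or `48 s > q` decides all the minima in the same way, and `s_1(N) = ⌊q/48⌋`.
-/

open Module Filter Submodule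
open AffineMap (lineMap)
open scoped Polynomial

section Semicontinuity

variable {K A ι : Type*} [Field K] [Ring A] [Algebra K A] [Finite ι]

lemma exists_eval_eq_apply_eval (φ : A →ₗ[K] K) (p : A[X]) :
    ∃ q : K[X], ∀ z, q.eval z = φ (p.eval (algebraMap K A z)) := by
  induction p using Polynomial.induction_on' with
  | add p₁ p₂ h₁ h₂ =>
    obtain ⟨q₁, hq₁⟩ := h₁
    obtain ⟨q₂, hq₂⟩ := h₂
    exact ⟨q₁ + q₂, fun z => by rw [Polynomial.eval_add, Polynomial.eval_add, map_add, hq₁, hq₂]⟩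
  | monomial k a =>
    refine ⟨Polynomial.monomial k (φ a), fun z => ?_⟩
    rw [Polynomial.eval_monomial, Polynomial.eval_monomial, ← map_pow, ← Algebra.commutes,
      ← Algebra.smul_def, map_smul, smul_eq_mul, mul_comm]

/-- A left inverse of the family at `z₀` turns independence into the nonvanishing of a determinant
that is polynomial in `z`. -/
theorem eventually_linearIndependent_eval (v : ι → A[X]) {z₀ : K}
    (hv : LinearIndependent K fun i => (v i).eval (algebraMap K A z₀)) :
    ∀ᶠ z in cofinite, LinearIndependent K fun i => (v i).eval (algebraMap K A z) := by
  classical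
  have := Fintype.ofFinite ι
  obtain ⟨g, hg⟩ := LinearMap.exists_leftInverse_of_injective
    (Fintype.linearCombination K fun i => (v i).eval (algebraMap K A z₀))
    (LinearMap.ker_eq_bot.2 (linearIndependent_iff_injective_fintypeLinearCombination.1 hv))
  choose P hP using fun i j => exists_eval_eq_apply_eval (LinearMap.proj j ∘ₗ g) (v i)
  have eval_det (z : K) : (Matrix.of P).det.eval z =
      (Matrix.of fun i => g ((v i).eval (algebraMap K A z))).det := by
    rw [← Polynomial.coe_evalRingHom, RingHom.map_det]
    congr 1
    ext i j
    exact hP i j z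
  have det_z₀ : (Matrix.of P).det.eval z₀ = 1 := by
    rw [eval_det, ← Matrix.det_one (n := ι)]
    congr 1
    ext i j
    have := LinearMap.congr_fun hg (Pi.single i 1)
    rw [LinearMap.comp_apply, Fintype.linearCombination_apply_single, one_smul] at this
    rw [Matrix.of_apply, this, LinearMap.id_apply, Matrix.one_eq_pi_single]
  have det_ne_zero : (Matrix.of P).det ≠ 0 := fun h => by simp [h] at det_z₀
  filter_upwards [(Polynomial.finite_setOfPred_isRoot det_ne_zero).compl_mem_cofinite] with z hz
  rw [Set.mem_compl_iff, Set.mem_ofPred_eq, Polynomial.IsRoot.def, eval_det] at hz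
  exact LinearIndependent.of_comp g (Matrix.linearIndependent_rows_of_det_ne_zero hz)

theorem eventually_finrank_span_eval_le (v : ι → A[X]) (z₀ : K) :
    ∀ᶠ z in cofinite,
      finrank K (span K (Set.range fun i => (v i).eval (algebraMap K A z₀))) ≤
        finrank K (span K (Set.range fun i => (v i).eval (algebraMap K A z))) := by
  obtain ⟨κ, a, ha, hspan, hli⟩ :=
    exists_linearIndependent' K fun i => (v i).eval (algebraMap K A z₀)
  have : Finite κ := Finite.of_injective a ha
  have := Fintype.ofFinite κ
  filter_upwards [eventually_linearIndependent_eval (v ∘ a) hli] with z hz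
  rw [← hspan, finrank_span_eq_card hli, ← finrank_span_eq_card hz]
  have := FiniteDimensional.span_of_finite K
    (Set.finite_range fun i => (v i).eval (algebraMap K A z))
  refine finrank_mono (span_mono ?_)
  exact Set.range_comp_subset_range a fun i => (v i).eval (algebraMap K A z)

theorem eventually_finrank_sup_span_eval_le (S : Submodule K A) [FiniteDimensional K S]
    (v : ι → A[X]) (z₀ : K) :
    ∀ᶠ z in cofinite,
      finrank K ↥(S ⊔ span K (Set.range fun i => (v i).eval (algebraMap K A z₀))) ≤
        finrank K ↥(S ⊔ span K (Set.range fun i => (v i).eval (algebraMap K A z))) := by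
  obtain ⟨s, rfl⟩ := (Submodule.fg_iff_finiteDimensional S).2 inferInstance
  let w : s ⊕ ι → A[X] := Sum.elim (fun b => Polynomial.C (b : A)) v
  have span_w (z : K) : span K (Set.range fun x => (w x).eval (algebraMap K A z)) =
      span K s ⊔ span K (Set.range fun i => (v i).eval (algebraMap K A z)) := by
    rw [← span_union]
    congr 1
    ext x
    simp [w]
  filter_upwards [eventually_finrank_span_eval_le w z₀] with z hz
  rwa [span_w, span_w] at hz

end Semicontinuity

lemma finrank_finset_sup_le {K E ι : Type*} [Field K] [AddCommGroup E] [Module K E]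
    (V : ι → Submodule K E) [∀ i, FiniteDimensional K (V i)] (s : Finset ι) :
    finrank K ↥(s.sup V) ≤ ∑ i ∈ s, finrank K (V i) := by
  induction s using Finset.cons_induction with
  | empty => simp
  | cons i s hi ih =>
    rw [Finset.sup_cons, Finset.sum_cons]
    exact (finrank_add_le_finrank_add_finrank _ _).trans (by gcongr)

lemma finrank_homogeneousSubmodule (σ K : Type*) [Fintype σ] [Field K] (d : ℕ) :
    finrank K (homogeneousSubmodule σ K d) = (Fintype.card σ).multichoose d := by
  classical
  rw [homogeneousSubmodule_eq_finsupp_supported]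
  let e : Sym σ d ≃ ({u : σ →₀ ℕ | u.degree = d} : Set _) := Sym.equivNatSum σ d
  let := Fintype.ofEquiv _ e
  rw [LinearEquiv.finrank_eq (AddMonoidAlgebra.supportedEquivFinsupp _), finrank_finsupp_self,
    ← Fintype.card_congr e, Sym.card_sym_eq_multichoose]

instance finiteDimensional_homogeneousSubmodule (σ K : Type*) [Finite σ] [Field K] (d : ℕ) :
    FiniteDimensional K (homogeneousSubmodule σ K d) :=
  Module.Finite.of_fg (homogeneousSubmodule_fg σ K d)

lemma finrank_map_rename {R σ τ : Type*} [CommSemiring R] {f : σ → τ} (hf : f.Injective)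
    (V : Submodule R (MvPolynomial σ R)) :
    finrank R (V.map (rename f).toLinearMap) = finrank R V :=
  (equivMapOfInjective (rename f).toLinearMap (rename_injective f hf) V).finrank_eq.symm

lemma finrank_homogeneousSubmodule_three (n : ℕ) :
    finrank ℂ (homogeneousSubmodule (Fin (n + 1)) ℂ 3) = (n + 3).choose 3 := by
  rw [finrank_homogeneousSubmodule, Fintype.card_fin, Nat.multichoose_eq]
  rfl

section LinearForms

variable {n : ℕ}

lemma lin_eq_linearCombination (v : Fin (n + 1) → ℂ) :
    lin v = Fintype.linearCombination ℂ MvPolynomial.X v := by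
  simp only [lin, Fintype.linearCombination_apply, smul_eq_C_mul]

lemma range_lin :
    Set.range (lin (n := n)) =
      (homogeneousSubmodule (Fin (n + 1)) ℂ 1 : Set (MvPolynomial _ ℂ)) := by
  rw [homogeneousSubmodule_one_eq_span_X, ← Fintype.range_linearCombination, LinearMap.coe_range]
  exact congrArg Set.range (funext lin_eq_linearCombination)

lemma isHomogeneous_lin (v : Fin (n + 1) → ℂ) : (lin v).IsHomogeneous 1 :=
  range_lin.subset (Set.mem_range_self v)

lemma exists_eval_eq_lin_lineMap (v w : Fin (n + 1) → ℂ) :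
    ∃ p : (MvPolynomial (Fin (n + 1)) ℂ)[X], ∀ z : ℂ,
      p.eval (algebraMap ℂ _ z) = lin (lineMap v w z) := by
  refine ⟨Polynomial.C (lin v) + Polynomial.X * Polynomial.C (lin (w - v)), fun z => ?_⟩
  simp [lin_eq_linearCombination, AffineMap.lineMap_apply_module', ← smul_eq_C_mul, add_comm]

lemma lin_extendByZero {m : ℕ} {f : Fin (n + 1) → Fin (m + 1)} (hf : f.Injective)
    (v : Fin (n + 1) → ℂ) :
    lin (Function.ExtendByZero.linearMap ℂ f v) = rename f (lin v) := by
  simp only [lin, map_sum, map_mul, rename_C, rename_X]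
  refine (Fintype.sum_of_injective f hf _ _ (fun j hj => ?_) fun j => ?_).symm
  · rw [Function.ExtendByZero.linearMap_apply, Function.extend_apply' _ _ _ hj, Pi.zero_apply,
      MvPolynomial.C_0, zero_mul]
  · rw [Function.ExtendByZero.linearMap_apply, hf.extend_apply]

lemma mul_lin_mem_mulU (f : MvPolynomial (Fin (n + 1)) ℂ) (v : Fin (n + 1) → ℂ) :
    f * lin v ∈ mulU f := by
  simp only [lin, Finset.mul_sum, ← smul_eq_C_mul, mul_smul_comm]
  exact sum_mem fun j _ => smul_mem _ _ (subset_span ⟨j, rfl⟩)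

instance finiteDimensional_mulU (f : MvPolynomial (Fin (n + 1)) ℂ) :
    FiniteDimensional ℂ (mulU f) :=
  FiniteDimensional.span_of_finite ℂ (Set.finite_range _)

lemma mulU_zero : mulU (0 : MvPolynomial (Fin (n + 1)) ℂ) = ⊥ := by
  simp [mulU]

lemma finrank_mulU_le (f : MvPolynomial (Fin (n + 1)) ℂ) : finrank ℂ (mulU f) ≤ n + 1 :=
  (finrank_range_le_card fun j => f * MvPolynomial.X j).trans_eq (Fintype.card_fin _)

lemma mulU_le_homogeneousSubmodule {f : MvPolynomial (Fin (n + 1)) ℂ} {d : ℕ}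
    (hf : f.IsHomogeneous d) : mulU f ≤ homogeneousSubmodule (Fin (n + 1)) ℂ (d + 1) := by
  rw [mulU, span_le]
  rintro _ ⟨j, rfl⟩
  exact hf.mul (isHomogeneous_X ℂ j)

lemma map_rename_mulU_le {m : ℕ} (g : Fin (n + 1) → Fin (m + 1))
    (f : MvPolynomial (Fin (n + 1)) ℂ) :
    (mulU f).map (rename g).toLinearMap ≤ mulU (rename g f) := by
  rw [mulU, map_span, span_le]
  rintro _ ⟨_, ⟨j, rfl⟩, rfl⟩
  rw [AlgHom.toLinearMap_apply, map_mul, rename_X]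
  exact subset_span ⟨g j, rfl⟩

lemma iSup_mulU_eq_span {κ : Type*} (f : κ → MvPolynomial (Fin (n + 1)) ℂ) :
    ⨆ k, mulU (f k) =
      span ℂ (Set.range fun x : κ × Fin (n + 1) => f x.1 * MvPolynomial.X x.2) := by
  simp only [mulU, ← span_iUnion]
  congr 1
  ext p
  simp

lemma finrank_mulU_mul_lin_sup_le (f : MvPolynomial (Fin (n + 1)) ℂ) (ℓ m : Fin (n + 1) → ℂ) :
    finrank ℂ ↥(mulU (f * lin ℓ) ⊔ mulU (f * lin m)) ≤ 2 * n + 1 := by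
  have hℓ := finrank_mulU_le (f * lin ℓ)
  have hm := finrank_mulU_le (f * lin m)
  by_cases hfℓ : f * lin ℓ = 0
  · rw [hfℓ, mulU_zero, bot_sup_eq]
    lia
  by_cases hfm : f * lin m = 0
  · rw [hfm, mulU_zero, sup_bot_eq]
    lia
  have inf_ne_bot : mulU (f * lin ℓ) ⊓ mulU (f * lin m) ≠ ⊥ := by
    refine (Submodule.ne_bot_iff _).2 ⟨f * lin ℓ * lin m, ⟨mul_lin_mem_mulU _ _, ?_⟩,
      mul_ne_zero hfℓ (right_ne_zero_of_mul hfm)⟩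
    rw [mul_right_comm]
    exact mul_lin_mem_mulU _ _
  have inf_pos := one_le_finrank_iff.2 inf_ne_bot
  have := finrank_sup_add_finrank_inf_eq (mulU (f * lin ℓ)) (mulU (f * lin m))
  lia

end LinearForms

section TangentCones

variable {n : ℕ}

lemma tanCone_le_homogeneousSubmodule {d : ℕ} (hd : 2 ≤ d) (ℓ m : Fin (n + 1) → ℂ) :
    tanCone d ℓ m ≤ homogeneousSubmodule (Fin (n + 1)) ℂ d := by
  obtain ⟨d, rfl⟩ := Nat.exists_eq_add_of_le' hd
  refine sup_le (mulU_le_homogeneousSubmodule ?_) (mulU_le_homogeneousSubmodule ?_)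
  · simpa using (isHomogeneous_lin ℓ).pow (d + 1)
  · simpa using ((isHomogeneous_lin ℓ).pow d).mul (isHomogeneous_lin m)

instance finiteDimensional_tanCone (d : ℕ) (ℓ m : Fin (n + 1) → ℂ) :
    FiniteDimensional ℂ (tanCone d ℓ m) := by
  unfold tanCone
  infer_instance

lemma finrank_tanCone_le {d : ℕ} (hd : 2 ≤ d) (ℓ m : Fin (n + 1) → ℂ) :
    finrank ℂ (tanCone d ℓ m) ≤ 2 * n + 1 := by
  obtain ⟨d, rfl⟩ := Nat.exists_eq_add_of_le' hd
  exact finrank_mulU_mul_lin_sup_le (lin ℓ ^ d) ℓ m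

lemma map_rename_tanCone_le {k : ℕ} {f : Fin (n + 1) → Fin (k + 1)} (hf : f.Injective) (d : ℕ)
    (ℓ m : Fin (n + 1) → ℂ) :
    (tanCone d ℓ m).map (rename f).toLinearMap ≤
      tanCone d (Function.ExtendByZero.linearMap ℂ f ℓ)
        (Function.ExtendByZero.linearMap ℂ f m) := by
  simp only [tanCone, Submodule.map_sup, lin_extendByZero hf, ← map_pow, ← map_mul]
  exact sup_le_sup (map_rename_mulU_le f _) (map_rename_mulU_le f _)

/-- The sum of the tangent cones at the points `[ℓ_i^{d-1} m_i]`. By Terracini's lemma, for general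
points it is the affine tangent space to a secant variety of the tangential variety `T_{n,d}`. -/
noncomputable def tanSpan {ι : Type*} (d : ℕ) (ℓ m : ι → Fin (n + 1) → ℂ) :
    Submodule ℂ (MvPolynomial (Fin (n + 1)) ℂ) :=
  ⨆ i, tanCone d (ℓ i) (m i)

lemma tanSpan_eq_iSup_mulU {ι : Type*} (d : ℕ) (ℓ m : ι → Fin (n + 1) → ℂ) :
    tanSpan d ℓ m = ⨆ x : ι ⊕ ι, mulU
      (Sum.elim (fun i => lin (ℓ i) ^ (d - 1)) (fun i => lin (ℓ i) ^ (d - 2) * lin (m i)) x) := by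
  simp only [tanSpan, tanCone, iSup_sup_eq, iSup_sum, Sum.elim_inl, Sum.elim_inr]

instance finiteDimensional_tanSpan {ι : Type*} [Finite ι] (d : ℕ) (ℓ m : ι → Fin (n + 1) → ℂ) :
    FiniteDimensional ℂ (tanSpan d ℓ m) := by
  unfold tanSpan
  infer_instance

lemma tanSpan_append (d : ℕ) {s t : ℕ} (ℓ m : Fin s → Fin (n + 1) → ℂ)
    (ℓ' m' : Fin t → Fin (n + 1) → ℂ) :
    tanSpan d (Fin.append ℓ ℓ') (Fin.append m m') = tanSpan d ℓ m ⊔ tanSpan d ℓ' m' := by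
  rw [tanSpan, ← finSumFinEquiv.iSup_comp, iSup_sum]
  simp [tanSpan]

lemma tanSpan_le_homogeneousSubmodule {ι : Type*} {d : ℕ} (hd : 2 ≤ d)
    (ℓ m : ι → Fin (n + 1) → ℂ) :
    tanSpan d ℓ m ≤ homogeneousSubmodule (Fin (n + 1)) ℂ d :=
  iSup_le fun i => tanCone_le_homogeneousSubmodule hd (ℓ i) (m i)

lemma finrank_tanSpan_le {ι : Type*} [Fintype ι] {d : ℕ} (hd : 2 ≤ d)
    (ℓ m : ι → Fin (n + 1) → ℂ) :
    finrank ℂ (tanSpan d ℓ m) ≤ Fintype.card ι * (2 * n + 1) := by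
  rw [tanSpan, ← Finset.sup_univ_eq_iSup]
  exact (finrank_finset_sup_le _ _).trans <|
    Finset.sum_le_card_nsmul _ _ _ fun i _ => finrank_tanCone_le hd (ℓ i) (m i)

lemma map_rename_tanSpan_le {ι : Type*} {k : ℕ} {f : Fin (n + 1) → Fin (k + 1)}
    (hf : f.Injective) (d : ℕ) (ℓ m : ι → Fin (n + 1) → ℂ) :
    (tanSpan d ℓ m).map (rename f).toLinearMap ≤ tanSpan d
      (Function.ExtendByZero.linearMap ℂ f ∘ ℓ) (Function.ExtendByZero.linearMap ℂ f ∘ m) := by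
  rw [tanSpan, Submodule.map_iSup]
  exact iSup_mono fun i => map_rename_tanCone_le hf d (ℓ i) (m i)

theorem eventually_finrank_sup_tanSpan_lineMap_le {ι : Type*} [Finite ι] (d : ℕ)
    (S : Submodule ℂ (MvPolynomial (Fin (n + 1)) ℂ)) [FiniteDimensional ℂ S]
    (ℓ₀ ℓ₁ m₀ m₁ : ι → Fin (n + 1) → ℂ) (z₀ : ℂ) :
    ∀ᶠ z in cofinite,
      finrank ℂ ↥(S ⊔ tanSpan d (lineMap (k := ℂ) ℓ₀ ℓ₁ z₀) (lineMap (k := ℂ) m₀ m₁ z₀)) ≤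
        finrank ℂ ↥(S ⊔ tanSpan d (lineMap (k := ℂ) ℓ₀ ℓ₁ z) (lineMap (k := ℂ) m₀ m₁ z)) := by
  choose p hp using fun i => exists_eval_eq_lin_lineMap (ℓ₀ i) (ℓ₁ i)
  choose q hq using fun i => exists_eval_eq_lin_lineMap (m₀ i) (m₁ i)
  let v : (ι ⊕ ι) × Fin (n + 1) → (MvPolynomial (Fin (n + 1)) ℂ)[X] := fun x =>
    Sum.elim (fun i => p i ^ (d - 1)) (fun i => p i ^ (d - 2) * q i) x.1 *
      Polynomial.C (MvPolynomial.X x.2)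
  have span_v (z : ℂ) : span ℂ (Set.range fun x => (v x).eval (algebraMap ℂ _ z)) =
      tanSpan d (lineMap (k := ℂ) ℓ₀ ℓ₁ z) (lineMap (k := ℂ) m₀ m₁ z) := by
    rw [tanSpan_eq_iSup_mulU, iSup_mulU_eq_span]
    congr 2
    ext1 ⟨i | i, j⟩ <;>
      simp only [v, Sum.elim_inl, Sum.elim_inr, Polynomial.eval_mul, Polynomial.eval_pow,
        Polynomial.eval_C, hp, hq, AffineMap.pi_lineMap_apply]
  filter_upwards [eventually_finrank_sup_span_eval_le S v z₀] with z hz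
  rwa [span_v, span_v] at hz

theorem exists_finrank_tanSpan_le {ι : Type*} [Finite ι] {k : ℕ}
    (f : (Fin (n + 1) → ℂ) →ₗ[ℂ] (Fin (k + 1) → ℂ)) (d : ℕ)
    (S : Submodule ℂ (MvPolynomial (Fin (k + 1)) ℂ)) [FiniteDimensional ℂ S]
    (ℓ₀ ℓ₁ m₀ m₁ : ι → Fin (n + 1) → ℂ) :
    ∃ ℓ m : ι → Fin (n + 1) → ℂ,
      finrank ℂ ↥(S ⊔ tanSpan d (f ∘ ℓ₀) (f ∘ m₀)) ≤
        finrank ℂ ↥(S ⊔ tanSpan d (f ∘ ℓ) (f ∘ m)) ∧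
      finrank ℂ (tanSpan d ℓ₁ m₁) ≤ finrank ℂ (tanSpan d ℓ m) := by
  have comp_lineMap (u w : ι → Fin (n + 1) → ℂ) (z : ℂ) :
      f ∘ (lineMap (k := ℂ) u w z) = lineMap (k := ℂ) (f ∘ u) (f ∘ w) z := by
    ext1 i
    simp [AffineMap.pi_lineMap_apply, AffineMap.lineMap_apply_module]
  obtain ⟨z, h₀, h₁⟩ :=
    ((eventually_finrank_sup_tanSpan_lineMap_le d S (f ∘ ℓ₀) (f ∘ ℓ₁) (f ∘ m₀) (f ∘ m₁) 0).and
      (eventually_finrank_sup_tanSpan_lineMap_le d ⊥ ℓ₀ ℓ₁ m₀ m₁ 1)).exists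
  refine ⟨lineMap (k := ℂ) ℓ₀ ℓ₁ z, lineMap (k := ℂ) m₀ m₁ z, ?_, ?_⟩
  · rw [AffineMap.lineMap_apply_zero, AffineMap.lineMap_apply_zero] at h₀
    rwa [comp_lineMap, comp_lineMap]
  · rwa [bot_sup_eq, bot_sup_eq, AffineMap.lineMap_apply_one, AffineMap.lineMap_apply_one] at h₁

end TangentCones

section CoordinateSubspace

variable {N : ℕ}

/-- The inclusion of the indices `{0, …, N}` as `{24, …, N + 24}`, the indices of the variables
spanning `U_1` in `ℂ^{N+25}`. -/
def shift (j : Fin (N + 1)) : Fin (N + 24 + 1) := ⟨j + 24, by lia⟩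

lemma shift_injective : Function.Injective (shift (N := N)) := fun i j h => by
  simpa [shift, Fin.ext_iff] using h

lemma mem_range_shift {j : Fin (N + 24 + 1)} : j ∈ Set.range shift ↔ 24 ≤ (j : ℕ) := by
  refine ⟨?_, fun h => ⟨⟨j - 24, by lia⟩, Fin.ext (Nat.sub_add_cancel h)⟩⟩
  rintro ⟨i, rfl⟩
  exact Nat.le_add_left 24 i

/-- Extension of a coefficient vector by `24` leading zeros, identifying `ℂ^{N+1}` with the
subspace `U_1` of `ℂ^{N+25}`. -/
noncomputable def padZeros : (Fin (N + 1) → ℂ) →ₗ[ℂ] (Fin (N + 24 + 1) → ℂ) :=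
  Function.ExtendByZero.linearMap ℂ shift

lemma memU_zero_iff {v : Fin (N + 24 + 1) → ℂ} : memU 0 v ↔ v ∈ Set.range padZeros := by
  constructor
  · intro hv
    refine ⟨v ∘ shift, funext fun j => ?_⟩
    by_cases hj : j ∈ Set.range shift
    · obtain ⟨i, rfl⟩ := hj
      exact shift_injective.extend_apply _ _ i
    · rw [padZeros, Function.ExtendByZero.linearMap_apply, Function.extend_apply' _ _ _ hj]
      exact (hv j (Nat.zero_le _) (not_le.1 (mt mem_range_shift.2 hj))).symm
  · rintro ⟨w, rfl⟩ j - hj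
    exact Function.extend_apply' _ _ _ fun h => hj.not_ge (mem_range_shift.1 h)

lemma image_lin_memU_zero :
    lin '' {v : Fin (N + 24 + 1) → ℂ | memU 0 v} =
      rename shift '' (homogeneousSubmodule (Fin (N + 1)) ℂ 1 : Set (MvPolynomial _ ℂ)) := by
  rw [← range_lin, ← Set.range_comp]
  have setOf_memU_zero : {v : Fin (N + 24 + 1) → ℂ | memU 0 v} = Set.range padZeros :=
    Set.ext fun _ => memU_zero_iff
  rw [setOf_memU_zero, ← Set.range_comp]
  exact congrArg Set.range (funext fun v => lin_extendByZero shift_injective v)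

lemma S3U_eq_span_pow {n : ℕ} (i : Fin 3) :
    S3U i = span ℂ (lin '' {v : Fin (n + 1) → ℂ | memU i v}) ^ 3 := by
  rw [pow_three', span_mul_span, span_mul_span, S3U]
  congr 1
  ext p
  simp only [Set.mem_mul, Set.mem_image]
  constructor
  · rintro ⟨a, b, c, ha, hb, hc, rfl⟩
    exact ⟨_, ⟨_, ⟨a, ha, rfl⟩, _, ⟨b, hb, rfl⟩, rfl⟩, _, ⟨c, hc, rfl⟩, rfl⟩
  · rintro ⟨_, ⟨_, ⟨a, ha, rfl⟩, _, ⟨b, hb, rfl⟩, rfl⟩, _, ⟨c, hc, rfl⟩, rfl⟩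
    exact ⟨a, b, c, ha, hb, hc, rfl⟩

lemma S3U_zero_eq_map :
    S3U 0 = (homogeneousSubmodule (Fin (N + 1)) ℂ 3).map (rename shift).toLinearMap := by
  rw [S3U_eq_span_pow, image_lin_memU_zero, ← homogeneousSubmodule_one_pow _ 3,
    Submodule.map_pow]
  congr 1
  exact span_eq ((homogeneousSubmodule (Fin (N + 1)) ℂ 1).map (rename shift).toLinearMap)

instance finiteDimensional_S3U_zero :
    FiniteDimensional ℂ (S3U 0 : Submodule ℂ (MvPolynomial (Fin (N + 24 + 1)) ℂ)) := by
  rw [S3U_zero_eq_map]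
  infer_instance

lemma finrank_S3U_zero :
    finrank ℂ (S3U 0 : Submodule ℂ (MvPolynomial (Fin (N + 24 + 1)) ℂ)) = (N + 3).choose 3 := by
  rw [S3U_zero_eq_map, finrank_map_rename shift_injective, finrank_homogeneousSubmodule_three]

theorem finrank_S3U_sup_tanSpan_add_le {ι : Type*} [Finite ι]
    (T : Submodule ℂ (MvPolynomial (Fin (N + 24 + 1)) ℂ)) [FiniteDimensional ℂ T]
    (ℓ m : ι → Fin (N + 1) → ℂ) :
    finrank ℂ ↥(S3U 0 ⊔ T ⊔ tanSpan 3 (padZeros ∘ ℓ) (padZeros ∘ m)) +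
        finrank ℂ (tanSpan 3 ℓ m) ≤
      finrank ℂ ↥(tanSpan 3 (padZeros ∘ ℓ) (padZeros ∘ m) ⊔ T) + (N + 3).choose 3 := by
  let W := tanSpan 3 (padZeros ∘ ℓ) (padZeros ∘ m) ⊔ T
  have image_le : (tanSpan 3 ℓ m).map (rename shift).toLinearMap ≤ S3U 0 ⊓ W := by
    refine le_inf ?_ ((map_rename_tanSpan_le shift_injective 3 ℓ m).trans le_sup_left)
    rw [S3U_zero_eq_map]
    exact Submodule.map_mono (tanSpan_le_homogeneousSubmodule (by norm_num) ℓ m)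
  calc
    _ = finrank ℂ ↥(S3U 0 ⊔ W) + finrank ℂ ((tanSpan 3 ℓ m).map (rename shift).toLinearMap) := by
      rw [finrank_map_rename shift_injective, sup_assoc, sup_comm T]
    _ ≤ finrank ℂ ↥(S3U 0 ⊔ W) + finrank ℂ ↥(S3U 0 ⊓ W) := by gcongr; exact finrank_mono image_le
    _ = finrank ℂ W + (N + 3).choose 3 := by
      rw [finrank_sup_add_finrank_inf_eq, finrank_S3U_zero, add_comm]

end CoordinateSubspace

section ExpectedDimension

variable {n s : ℕ}

lemma Wspace_eq_tanSpan {a : Fin 3 → ℕ} (ha : a = 0) (ℓ m : Fin s → Fin (n + 1) → ℂ)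
    (ℓ' m' : (i : Fin 3) → Fin (a i) → Fin (n + 1) → ℂ) :
    Wspace ℓ m ℓ' m' = tanSpan 3 ℓ m := by
  subst ha
  simp [Wspace, tanSpan]

lemma Wspace_eq_S3U_sup {a : Fin 3 → ℕ} (ha : ∀ i, a i ≠ 0 ↔ i = 0)
    (ℓ m : Fin s → Fin (n + 1) → ℂ) (ℓ' m' : (i : Fin 3) → Fin (a i) → Fin (n + 1) → ℂ) :
    Wspace ℓ m ℓ' m' = S3U 0 ⊔ tanSpan 3 ℓ m ⊔ tanSpan 3 (ℓ' 0) (m' 0) := by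
  rw [Wspace, iSup_subtype, sup_right_comm]
  simp only [ha, iSup_iSup_eq_left, tanSpan]

lemma expdimZ_zero (n s : ℕ) :
    expdimZ n s ![0, 0, 0] = min ((2 * n + 1) * s : ℤ) ((n + 3).choose 3) := by
  have : kcount ![0, 0, 0] = 0 := by decide
  simp [expdimZ, this, altsum]

lemma expdimZ_single {a : ℕ} (ha : a ≠ 0) (n s : ℕ) :
    expdimZ n s ![a, 0, 0] =
      min (((n - 21).choose 3 : ℤ) + 48 * a + (2 * n + 1) * s) ((n + 3).choose 3) := by
  have : kcount ![a, 0, 0] = 1 := by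
    rw [kcount, Finset.card_eq_one]
    exact ⟨0, by ext i; fin_cases i <;> simp [ha]⟩
  simp [expdimZ, this, altsum, show n + 3 - 24 = n - 21 by lia]

lemma finrank_tanSpan_le_expdimZ (ℓ m : Fin s → Fin (n + 1) → ℂ) :
    (finrank ℂ (tanSpan 3 ℓ m) : ℤ) ≤ expdimZ n s ![0, 0, 0] := by
  rw [expdimZ_zero]
  refine le_min ?_ ?_
  · have := finrank_tanSpan_le (d := 3) (by norm_num) ℓ m
    rw [Fintype.card_fin, mul_comm] at this
    exact_mod_cast this
  · rw [← finrank_homogeneousSubmodule_three]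
    exact_mod_cast finrank_mono (tanSpan_le_homogeneousSubmodule (by norm_num) ℓ m)

lemma TStmt_zero_iff :
    TStmt n s ![0, 0, 0] ↔
      ∃ ℓ m : Fin s → Fin (n + 1) → ℂ, expdimZ n s ![0, 0, 0] ≤ finrank ℂ (tanSpan 3 ℓ m) := by
  have ha : ![0, 0, 0] = (0 : Fin 3 → ℕ) := by simp
  constructor
  · rintro ⟨ℓ, m, ℓ', m', -, h⟩
    exact ⟨ℓ, m, by rw [← h, Wspace_eq_tanSpan ha]⟩
  · rintro ⟨ℓ, m, h⟩
    refine ⟨ℓ, m, 0, 0, fun i j => ⟨fun _ _ _ => rfl, fun _ _ _ => rfl⟩, ?_⟩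
    rw [Wspace_eq_tanSpan ha]
    exact (finrank_tanSpan_le_expdimZ ℓ m).antisymm h

lemma TStmt.exists_finrank_eq {N a : ℕ} (ha : a ≠ 0) (h : TStmt (N + 24) s ![a, 0, 0]) :
    ∃ (ℓ m : Fin s → Fin (N + 24 + 1) → ℂ) (ℓ₀ m₀ : Fin a → Fin (N + 1) → ℂ),
      (finrank ℂ ↥(S3U 0 ⊔ tanSpan 3 ℓ m ⊔ tanSpan 3 (padZeros ∘ ℓ₀) (padZeros ∘ m₀)) : ℤ) =
        expdimZ (N + 24) s ![a, 0, 0] := by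
  obtain ⟨ℓ, m, ℓ', m', hU, h⟩ := h
  choose ℓ₀ hℓ₀ using fun j => memU_zero_iff.1 (hU 0 j).1
  choose m₀ hm₀ using fun j => memU_zero_iff.1 (hU 0 j).2
  rw [Wspace_eq_S3U_sup (fun i => by fin_cases i <;> simp [ha]), ← funext hℓ₀, ← funext hm₀] at h
  exact ⟨ℓ, m, ℓ₀, m₀, h⟩

theorem TStmt_add_of_expdimZ_le {N t a : ℕ} (ha : a ≠ 0)
    (h₁ : TStmt (N + 24) t ![a, 0, 0]) (h₂ : TStmt N a ![0, 0, 0])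
    (hdim : expdimZ (N + 24) (a + t) ![0, 0, 0] + (N + 3).choose 3 ≤
      expdimZ (N + 24) t ![a, 0, 0] + expdimZ N a ![0, 0, 0]) :
    TStmt (N + 24) (a + t) ![0, 0, 0] := by
  obtain ⟨ℓ, m, ℓ₀, m₀, h₁⟩ := h₁.exists_finrank_eq ha
  obtain ⟨ℓ₁, m₁, h₂⟩ := TStmt_zero_iff.1 h₂
  obtain ⟨ℓ₂, m₂, rank_ℓ₀, rank_ℓ₁⟩ :=
    exists_finrank_tanSpan_le padZeros 3 (S3U 0 ⊔ tanSpan 3 ℓ m) ℓ₀ ℓ₁ m₀ m₁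
  have grassmann := finrank_S3U_sup_tanSpan_add_le (tanSpan 3 ℓ m) ℓ₂ m₂
  rw [← tanSpan_append] at grassmann
  refine TStmt_zero_iff.2 ⟨Fin.append (padZeros ∘ ℓ₂) ℓ, Fin.append (padZeros ∘ m₂) m, ?_⟩
  zify at grassmann rank_ℓ₀ rank_ℓ₁
  linarith

end ExpectedDimension

section Numerics

lemma s1_eq (n : ℕ) : s1 n = (4 * n ^ 2 + 22 * n + 33) / 48 := by
  have hn := Nat.div_add_mod n 24
  rw [s1]
  set k := n / 24
  set r := n % 24
  have : 4 * n ^ 2 + 22 * n + 33 =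
      4 * r ^ 2 + 22 * r + 33 + 48 * (48 * k ^ 2 + (11 + 4 * r) * k) := by
    rw [← hn]
    ring
  rw [this, Nat.add_mul_div_left _ _ (by norm_num), add_comm]

lemma tfun_add_24 (N : ℕ) : tfun (N + 24) = 4 * N + 59 := by
  rw [tfun]
  lia

lemma s1_add_24 (N : ℕ) : s1 (N + 24) = s1 N + tfun (N + 24) := by
  have : 4 * (N + 24) ^ 2 + 22 * (N + 24) + 33 =
      4 * N ^ 2 + 22 * N + 33 + 48 * (4 * N + 59) := by ring
  rw [s1_eq, s1_eq, tfun_add_24, this, Nat.add_mul_div_left _ _ (by norm_num)]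

lemma forty_eight_mul_s1_le (n : ℕ) : 48 * s1 n ≤ 4 * n ^ 2 + 22 * n + 33 := by
  rw [s1_eq]
  exact Nat.mul_div_le _ 48

lemma lt_forty_eight_mul_s2 (n : ℕ) : 4 * n ^ 2 + 22 * n + 33 < 48 * s2 n := by
  rw [s2, s1_eq]
  exact Nat.lt_mul_div_succ _ (by norm_num)

lemma s1_pos {n : ℕ} (hn : 2 ≤ n) : 0 < s1 n := by
  rw [s1_eq]
  exact Nat.div_pos (by nlinarith) (by norm_num)

lemma six_mul_choose_three (n : ℕ) : 6 * (n + 3).choose 3 = (n + 3) * (n + 2) * (n + 1) := by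
  have := Nat.descFactorial_eq_factorial_mul_choose (n + 3) 3
  simp only [Nat.descFactorial, Nat.factorial] at this
  lia

lemma choose_three_add_24 (N : ℕ) :
    (N + 27).choose 3 =
      (N + 3).choose 3 + (4 * N ^ 2 + 22 * N + 33) + (2 * N + 49) * (4 * N + 59) := by
  have := six_mul_choose_three N
  have := six_mul_choose_three (N + 24)
  lia

lemma forty_eight_mul_choose_three (N : ℕ) :
    48 * (N + 3).choose 3 = (2 * N + 1) * (4 * N ^ 2 + 22 * N + 33) + 15 := by
  have := six_mul_choose_three N
  lia

lemma expdimZ_add_tfun_le {N a : ℕ} (ha : a ≠ 0)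
    (h : 48 * a ≤ 4 * N ^ 2 + 22 * N + 33 ∨ 7 ≤ N ∧ 4 * N ^ 2 + 22 * N + 33 < 48 * a) :
    expdimZ (N + 24) (a + tfun (N + 24)) ![0, 0, 0] + (N + 3).choose 3 ≤
      expdimZ (N + 24) (tfun (N + 24)) ![a, 0, 0] + expdimZ N a ![0, 0, 0] := by
  have choose_add := choose_three_add_24 N
  have choose_eq := forty_eight_mul_choose_three N
  rw [expdimZ_zero, expdimZ_single ha, expdimZ_zero, tfun_add_24]
  simp only [show N + 24 - 21 = N + 3 by lia, Nat.add_assoc N 24 3, Nat.reduceAdd]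
  rcases h with h | ⟨hN, h⟩
  · have key := Nat.mul_le_mul_left (2 * N + 1) h
    zify at choose_add choose_eq h key
    push_cast
    rw [min_eq_left, min_eq_left, min_eq_left] <;> linarith
  · -- The remainder `15` in `choose_eq` is absorbed because `15 ≤ 2 * N + 1`.
    have key := Nat.mul_le_mul_left (2 * N + 1) (Nat.succ_le_of_lt h)
    zify at choose_add choose_eq h hN key
    push_cast
    rw [min_eq_right, min_eq_right, min_eq_right] <;>
      linarith only [choose_add, choose_eq, h, hN, key]

end Numerics

/-- Proposition 3.7 (i): for `n ≥ 32`, truth of `T(n, t(n); s_i(n−24), 0, 0)` and of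
`T(n−24, s_i(n−24); 0, 0, 0)` implies truth of `T(n, s_i(n); 0, 0, 0)`. -/
theorem induction_step_i (si : ℕ → ℕ) (hsi : si = s1 ∨ si = s2) (n : ℕ) (hn : 32 ≤ n)
    (h1 : TStmt n (tfun n) ![si (n - 24), 0, 0])
    (h2 : TStmt (n - 24) (si (n - 24)) ![0, 0, 0]) :
    TStmt n (si n) ![0, 0, 0] := by
  obtain ⟨N, rfl⟩ := Nat.exists_eq_add_of_le' (show 24 ≤ n by lia)
  rw [Nat.add_sub_cancel] at h1 h2
  have hs : si (N + 24) = si N + tfun (N + 24) := by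
    rcases hsi with rfl | rfl
    · exact s1_add_24 N
    · rw [s2, s2, s1_add_24, add_right_comm]
  have h : 48 * si N ≤ 4 * N ^ 2 + 22 * N + 33 ∨
      7 ≤ N ∧ 4 * N ^ 2 + 22 * N + 33 < 48 * si N := by
    rcases hsi with rfl | rfl
    · exact .inl (forty_eight_mul_s1_le N)
    · exact .inr ⟨by lia, lt_forty_eight_mul_s2 N⟩
  have hne : si N ≠ 0 := by
    rcases hsi with rfl | rfl
    · exact (s1_pos (by lia)).ne'
    · exact Nat.succ_ne_zero _
  rw [hs]
  exact TStmt_add_of_expdimZ_le hne h1 h2 (expdimZ_add_tfun_le hne h)
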